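/- arXiv:1003.4640 — 3 statements merged into one kernel-verified Lean document; each statement's English description precedes it below -/
import Mathlib

section
/- The functions p, β, 𝒦 are pairwise in involution: regarding p, 𝒦, and the coordinate function β as smooth functions of (r, θ, φ, ξ, α, β) on the open set where Δ(r) ≠ 0 and θ ∈ (0, π), the functions p and 𝒦 do not depend on φ, and the Poisson brackets satisfy {p, β} = 0, {β, 𝒦} = 0, and {p, 𝒦} = 0 on this set. -/
/-- The Poisson bracket of two functions of the six variables (r, θ, φ, ξ, α, β),
{f, g} = ∂f/∂ξ·∂g/∂r − ∂f/∂r·∂g/∂ξ + ∂f/∂α·∂g/∂θ − ∂f/∂θ·∂g/∂α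
          + ∂f/∂β·∂g/∂φ − ∂f/∂φ·∂g/∂β. -/
noncomputable def poissonBracket6 (f g : ℝ → ℝ → ℝ → ℝ → ℝ → ℝ → ℝ)
    (r θ φ ξ α β : ℝ) : ℝ :=
    deriv (fun x => f r θ φ x α β) ξ * deriv (fun x => g x θ φ ξ α β) r
  - deriv (fun x => f x θ φ ξ α β) r * deriv (fun x => g r θ φ x α β) ξ
  + deriv (fun x => f r θ φ ξ x β) α * deriv (fun x => g r x φ ξ α β) θ
  - deriv (fun x => f r x φ ξ α β) θ * deriv (fun x => g r θ φ ξ x β) α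
  + deriv (fun x => f r θ φ ξ α x) β * deriv (fun x => g r θ x ξ α β) φ
  - deriv (fun x => f r θ x ξ α β) φ * deriv (fun x => g r θ φ ξ α x) β

/-!
On the set where `sin θ ≠ 0`, the Kerr symbol separates: it is the Carter constant, which involves
only `(θ, α, β)`, plus a radial function of `(r, ξ, β)` alone. The two summands involve conjugate
pairs from disjoint groups of variables, except for `β`, whose conjugate variable `φ` occurs in
neither; hence only the bracket of the Carter constant with itself could contribute to `{p, 𝒦}`.
The brackets with `β` are, up to sign, derivatives along `φ`.
-/

open Filter Function Topology

section PoissonBracket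

variable {f f' : ℝ → ℝ → ℝ → ℝ → ℝ → ℝ → ℝ} {r θ φ ξ α β : ℝ}

theorem poissonBracket6_antisymm (f g : ℝ → ℝ → ℝ → ℝ → ℝ → ℝ → ℝ) (r θ φ ξ α β : ℝ) :
    poissonBracket6 f g r θ φ ξ α β = -poissonBracket6 g f r θ φ ξ α β := by
  unfold poissonBracket6
  ring

theorem poissonBracket6_congr_left (g : ℝ → ℝ → ℝ → ℝ → ℝ → ℝ → ℝ)
    (h : ↿f =ᶠ[𝓝 (r, θ, φ, ξ, α, β)] ↿f') :
    poissonBracket6 f g r θ φ ξ α β = poissonBracket6 f' g r θ φ ξ α β := by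
  have deriv_comp_eq (γ : ℝ → ℝ × ℝ × ℝ × ℝ × ℝ × ℝ) (t : ℝ) (hγ : Continuous γ)
      (ht : γ t = (r, θ, φ, ξ, α, β)) : deriv (↿f ∘ γ) t = deriv (↿f' ∘ γ) t :=
    (h.comp_tendsto (hγ.tendsto' t _ ht)).deriv_eq
  have hr : deriv (fun x => f x θ φ ξ α β) r = deriv (fun x => f' x θ φ ξ α β) r :=
    deriv_comp_eq (fun x => (x, θ, φ, ξ, α, β)) r (by fun_prop) rfl
  have hθ : deriv (fun x => f r x φ ξ α β) θ = deriv (fun x => f' r x φ ξ α β) θ :=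
    deriv_comp_eq (fun x => (r, x, φ, ξ, α, β)) θ (by fun_prop) rfl
  have hφ : deriv (fun x => f r θ x ξ α β) φ = deriv (fun x => f' r θ x ξ α β) φ :=
    deriv_comp_eq (fun x => (r, θ, x, ξ, α, β)) φ (by fun_prop) rfl
  have hξ : deriv (fun x => f r θ φ x α β) ξ = deriv (fun x => f' r θ φ x α β) ξ :=
    deriv_comp_eq (fun x => (r, θ, φ, x, α, β)) ξ (by fun_prop) rfl
  have hα : deriv (fun x => f r θ φ ξ x β) α = deriv (fun x => f' r θ φ ξ x β) α :=
    deriv_comp_eq (fun x => (r, θ, φ, ξ, x, β)) α (by fun_prop) rfl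
  have hβ : deriv (fun x => f r θ φ ξ α x) β = deriv (fun x => f' r θ φ ξ α x) β :=
    deriv_comp_eq (fun x => (r, θ, φ, ξ, α, x)) β (by fun_prop) rfl
  simp only [poissonBracket6, hr, hθ, hφ, hξ, hα, hβ]

theorem poissonBracket6_separated (F G : ℝ → ℝ → ℝ → ℝ) (r θ φ ξ α β : ℝ) :
    poissonBracket6 (fun r θ _ ξ α β => F r ξ β + G θ α β) (fun _ θ _ _ α β => G θ α β)
      r θ φ ξ α β = 0 := by
  simp only [poissonBracket6, deriv_const, deriv_const_add]
  ring

/-- The momentum conjugate to `φ`, as a function on phase space; it generates the rotations about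
the axis of symmetry. -/
def axialMomentum (_r _θ _φ _ξ _α β : ℝ) : ℝ := β

theorem poissonBracket6_axialMomentum (f : ℝ → ℝ → ℝ → ℝ → ℝ → ℝ → ℝ) (r θ φ ξ α β : ℝ) :
    poissonBracket6 f axialMomentum r θ φ ξ α β = -deriv (fun x => f r θ x ξ α β) φ := by
  simp [poissonBracket6, axialMomentum]

end PoissonBracket

section Kerr

/-- The function `Δ` of the Kerr metric with mass `M` and angular momentum `M * a`, whose zeros are
the horizons. -/
def kerrDelta (M a r : ℝ) : ℝ := r ^ 2 - 2 * M * r + a ^ 2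

/-- The semiclassical principal symbol `p` of the Kerr operator; it takes junk values where
`kerrDelta M a r = 0` or `sin θ = 0`. -/
noncomputable def kerrSymbol (M a r θ _φ ξ α β : ℝ) : ℝ :=
  kerrDelta M a r * ξ ^ 2 + α ^ 2
    + (1 / (Real.sin θ) ^ 2 - a ^ 2 / kerrDelta M a r) * β ^ 2
    - (4 * M * a * r / kerrDelta M a r) * β
    - ((r ^ 2 + a ^ 2) ^ 2 / kerrDelta M a r - a ^ 2 * (Real.sin θ) ^ 2)

/-- The Carter constant `𝒦`, as a function of the variables `(θ, α, β)` on which it depends. -/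
noncomputable def carterConstant (a θ α β : ℝ) : ℝ :=
  α ^ 2 + (a * Real.sin θ - β / Real.sin θ) ^ 2

/-- The part of the Kerr symbol left after subtracting the Carter constant. The term `2 * a * β`
compensates the cross term of the square in `carterConstant`. -/
noncomputable def kerrRadialPart (M a r ξ β : ℝ) : ℝ :=
  kerrDelta M a r * ξ ^ 2 - a ^ 2 / kerrDelta M a r * β ^ 2
    - 4 * M * a * r / kerrDelta M a r * β - (r ^ 2 + a ^ 2) ^ 2 / kerrDelta M a r + 2 * a * β

theorem kerrSymbol_eq_kerrRadialPart_add_carterConstant (M a r φ ξ α β : ℝ) {θ : ℝ}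
    (hθ : Real.sin θ ≠ 0) :
    kerrSymbol M a r θ φ ξ α β = kerrRadialPart M a r ξ β + carterConstant a θ α β := by
  have cross_term : β / Real.sin θ * Real.sin θ = β := div_mul_cancel₀ β hθ
  unfold kerrSymbol kerrRadialPart carterConstant
  linear_combination 2 * a * cross_term

theorem kerrSymbol_eventuallyEq (M a r φ ξ α β : ℝ) {θ : ℝ} (hθ : Real.sin θ ≠ 0) :
    ↿(kerrSymbol M a) =ᶠ[𝓝 (r, θ, φ, ξ, α, β)]
      ↿(fun r θ (_ : ℝ) ξ α β => kerrRadialPart M a r ξ β + carterConstant a θ α β) := by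
  have sin_continuous : Continuous fun x : ℝ × ℝ × ℝ × ℝ × ℝ × ℝ => Real.sin x.2.1 := by fun_prop
  filter_upwards [sin_continuous.continuousAt.eventually_ne hθ]
    with ⟨r', θ', φ', ξ', α', β'⟩ hθ'
  exact kerrSymbol_eq_kerrRadialPart_add_carterConstant M a r' φ' ξ' α' β' hθ'

theorem kerr_involution_general (M a : ℝ) :
    let K : ℝ → ℝ → ℝ → ℝ → ℝ → ℝ → ℝ := fun _ θ _ _ α β => carterConstant a θ α β
    (∀ r θ φ φ' ξ α β : ℝ, kerrSymbol M a r θ φ ξ α β = kerrSymbol M a r θ φ' ξ α β) ∧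
    (∀ r θ φ φ' ξ α β : ℝ, K r θ φ ξ α β = K r θ φ' ξ α β) ∧
    (∀ r θ φ ξ α β : ℝ, kerrDelta M a r ≠ 0 → Real.sin θ ≠ 0 →
      poissonBracket6 (kerrSymbol M a) axialMomentum r θ φ ξ α β = 0 ∧
      poissonBracket6 axialMomentum K r θ φ ξ α β = 0 ∧
      poissonBracket6 (kerrSymbol M a) K r θ φ ξ α β = 0) := by
  intro K
  refine ⟨fun _ _ _ _ _ _ _ => rfl, fun _ _ _ _ _ _ _ => rfl,
    fun r θ φ ξ α β _ hθ => ⟨?_, ?_, ?_⟩⟩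
  · rw [poissonBracket6_axialMomentum]
    simp only [kerrSymbol, deriv_const, neg_zero]
  · rw [poissonBracket6_antisymm, poissonBracket6_axialMomentum]
    simp only [K, deriv_const, neg_zero]
  · rw [poissonBracket6_congr_left K (kerrSymbol_eventuallyEq M a r φ ξ α β hθ)]
    exact poissonBracket6_separated (kerrRadialPart M a) (carterConstant a) r θ φ ξ α β

end Kerr

/-- The Kerr symbol p, the coordinate function β, and the Carter constant 𝒦 are
pairwise in involution on the set where Δ(r) ≠ 0 and θ ∈ (0, π); moreover p and 𝒦
do not depend on φ. -/
theorem kerr_involution (M a : ℝ) (hM : 0 < M) (ha0 : 0 ≤ a) (haM : a < M) :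
    let p : ℝ → ℝ → ℝ → ℝ → ℝ → ℝ → ℝ := fun r θ _φ ξ α β =>
      (r ^ 2 - 2 * M * r + a ^ 2) * ξ ^ 2 + α ^ 2
        + (1 / (Real.sin θ) ^ 2 - a ^ 2 / (r ^ 2 - 2 * M * r + a ^ 2)) * β ^ 2
        - (4 * M * a * r / (r ^ 2 - 2 * M * r + a ^ 2)) * β
        - ((r ^ 2 + a ^ 2) ^ 2 / (r ^ 2 - 2 * M * r + a ^ 2)
            - a ^ 2 * (Real.sin θ) ^ 2)
    let K : ℝ → ℝ → ℝ → ℝ → ℝ → ℝ → ℝ := fun _r θ _φ _ξ α β =>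
      α ^ 2 + (a * Real.sin θ - β / Real.sin θ) ^ 2
    let B : ℝ → ℝ → ℝ → ℝ → ℝ → ℝ → ℝ := fun _r _θ _φ _ξ _α β => β
    (∀ r θ φ φ' ξ α β : ℝ, p r θ φ ξ α β = p r θ φ' ξ α β) ∧
    (∀ r θ φ φ' ξ α β : ℝ, K r θ φ ξ α β = K r θ φ' ξ α β) ∧
    (∀ r θ φ ξ α β : ℝ, r ^ 2 - 2 * M * r + a ^ 2 ≠ 0 → θ ∈ Set.Ioo 0 Real.pi →
      poissonBracket6 p B r θ φ ξ α β = 0 ∧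
      poissonBracket6 B K r θ φ ξ α β = 0 ∧
      poissonBracket6 p K r θ φ ξ α β = 0) :=
  have ⟨hp, hK, bracket_eq_zero⟩ := kerr_involution_general M a
  ⟨hp, hK, fun r θ φ ξ α β hΔ hθ =>
    bracket_eq_zero r θ φ ξ α β hΔ (Real.sin_pos_of_mem_Ioo hθ).ne'⟩
end

section
/- The escape-function weight is an order function (Lemma 4.3): let Q ⊆ ℝ^d be a compact set, Γ₊, Γ₋ ⊆ ℝ^d nonempty sets, C ≥ 1, and let φ₊, φ₋ : ℝ^d → ℝ satisfy (1/C)·dist(ρ, Γ±) ≤ |φ±(ρ)| ≤ C·dist(ρ, Γ±) for all ρ ∈ Q. Let χ, g : ℝ^d → ℝ be bounded Lipschitz functions. For ε ∈ (0, 1/2] define G_ε(ρ) = χ(ρ)·log((φ₋(ρ)² + ε²)/(φ₊(ρ)² + ε²)) + log(1/ε²)·g(ρ). Then there exist constants C₂ ≥ 1 and N > 0 such that for all ε ∈ (0, 1/2] and all ρ, ρ' ∈ Q: exp(G_ε(ρ) − G_ε(ρ')) ≤ C₂·(1 + |ρ − ρ'|²/ε²)^N. -/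
open scoped NNReal

/-!
Write `r = |ρ - ρ'|` and `L = log (1 + r² / ε²)`. Since `φ±` is comparable to a Lipschitz function,
`φ±(ρ)² + ε²` and `φ±(ρ')² + ε²` differ by a factor `O(1 + r² / ε²)`, so
`log (φ±² + ε²)` varies by `O(1 + L)`, while its size is `O(1 + log (1 / ε²))`. Multiplying by a
Lipschitz function `χ` adds an error `O(r (1 + log (1 / ε²)))`, which on a bounded set is again
`O(1 + L)`: indeed `log (1 / ε²) ≤ L - 2 log r`, and `r log r` is bounded below. The term
`log (1 / ε²) g` is the same product with a factor that does not depend on `ρ`.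
-/

section EscapeWeight

open Set Filter Bornology Asymptotics Real

section RealInequalities

variable {a b C M r ε : ℝ}

/-- The gauge `1 + log (1 + r² / ε²)` for the variation of the logarithm of an order function
between points at distance `r`. The summand `1` lets a single `O` absorb additive constants. -/
noncomputable def logGauge (ε r : ℝ) : ℝ := 1 + log (1 + r ^ 2 / ε ^ 2)

lemma one_le_logGauge (ε r : ℝ) : 1 ≤ logGauge ε r :=
  le_add_of_nonneg_right <| log_nonneg <| le_add_of_nonneg_right <| by positivity

lemma exp_mul_logGauge (c ε r : ℝ) :
    exp (c * logGauge ε r) = exp c * (1 + r ^ 2 / ε ^ 2) ^ c := by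
  rw [logGauge, rpow_def_of_pos (by positivity), ← exp_add]
  ring_nf

lemma log_one_div_sq_nonneg (hε : ε ∈ Ioc 0 1) : 0 ≤ log (1 / ε ^ 2) :=
  log_nonneg <| one_le_one_div (pow_pos hε.1 2) (pow_le_one₀ hε.1.le hε.2)

lemma mul_log_one_div_sq_le (hε : ε ≠ 0) (hr : 0 ≤ r) :
    r * log (1 / ε ^ 2) ≤ 2 + r * log (1 + r ^ 2 / ε ^ 2) := by
  rcases hr.eq_or_lt with rfl | hr_pos
  · simp
  have log_le : log (r ^ 2 * (1 / ε ^ 2)) ≤ log (1 + r ^ 2 / ε ^ 2) :=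
    log_le_log (by positivity) (by rw [mul_one_div]; linarith)
  rw [log_mul (by positivity) (by positivity), log_pow, Nat.cast_ofNat] at log_le
  linarith [mul_le_mul_of_nonneg_left log_le hr, self_sub_one_le_mul_log hr]

lemma mul_one_add_log_one_div_sq_le (hε : ε ≠ 0) (hr : 0 ≤ r) (hrM : r ≤ M) :
    r * (1 + log (1 / ε ^ 2)) ≤ (M + 2) * logGauge ε r :=
  calc r * (1 + log (1 / ε ^ 2)) ≤ r * logGauge ε r + 2 := by
        rw [logGauge]; linarith [mul_log_one_div_sq_le hε hr]
    _ ≤ M * logGauge ε r + 2 * logGauge ε r := by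
        have := one_le_logGauge ε r
        gcongr
        linarith
    _ = (M + 2) * logGauge ε r := by ring

lemma log_sq_add_sq_sub_le (hε : ε ≠ 0) (h : |a| ≤ C * (|b| + r)) :
    log (a ^ 2 + ε ^ 2) - log (b ^ 2 + ε ^ 2) ≤ (log (2 * C ^ 2 + 1) + 1) * logGauge ε r := by
  have sq_le : a ^ 2 ≤ 2 * C ^ 2 * (b ^ 2 + r ^ 2) :=
    calc a ^ 2 ≤ (C * (|b| + r)) ^ 2 := sq_le_sq.2 (h.trans (le_abs_self _))
      _ ≤ C ^ 2 * (2 * (|b| ^ 2 + r ^ 2)) := by rw [mul_pow]; gcongr; exact add_sq_le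
      _ = 2 * C ^ 2 * (b ^ 2 + r ^ 2) := by rw [sq_abs]; ring
  have le_mul : a ^ 2 + ε ^ 2 ≤ (2 * C ^ 2 + 1) * (1 + r ^ 2 / ε ^ 2) * (b ^ 2 + ε ^ 2) :=
    calc a ^ 2 + ε ^ 2 ≤ (2 * C ^ 2 + 1) * (b ^ 2 + r ^ 2 + ε ^ 2) := by
          nlinarith [sq_nonneg b, sq_nonneg r, mul_nonneg (sq_nonneg C) (sq_nonneg ε)]
      _ ≤ (2 * C ^ 2 + 1) * (b ^ 2 + r ^ 2 + ε ^ 2 + r ^ 2 / ε ^ 2 * b ^ 2) :=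
          mul_le_mul_of_nonneg_left (le_add_of_nonneg_right (by positivity)) (by positivity)
      _ = (2 * C ^ 2 + 1) * (1 + r ^ 2 / ε ^ 2) * (b ^ 2 + ε ^ 2) := by field_simp; ring
  have log_le := log_le_log (by positivity) le_mul
  rw [log_mul (by positivity) (by positivity), log_mul (by positivity) (by positivity)] at log_le
  have log_const_nonneg : 0 ≤ log (2 * C ^ 2 + 1) :=
    log_nonneg (le_add_of_nonneg_left (by positivity))
  calc log (a ^ 2 + ε ^ 2) - log (b ^ 2 + ε ^ 2)
      ≤ log (2 * C ^ 2 + 1) + log (1 + r ^ 2 / ε ^ 2) := by linarith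
    _ ≤ log (2 * C ^ 2 + 1) * logGauge ε r + logGauge ε r :=
        add_le_add (le_mul_of_one_le_right log_const_nonneg (one_le_logGauge ε r))
          (le_add_of_nonneg_left zero_le_one)
    _ = (log (2 * C ^ 2 + 1) + 1) * logGauge ε r := (add_one_mul _ _).symm

lemma abs_log_sq_add_sq_le (hε : ε ∈ Ioc 0 1) (ha : |a| ≤ M) :
    |log (a ^ 2 + ε ^ 2)| ≤ log (M ^ 2 + 1) + log (1 / ε ^ 2) := by
  have ε_pos : 0 < ε := hε.1
  have upper : log (a ^ 2 + ε ^ 2) ≤ log (M ^ 2 + 1) :=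
    log_le_log (by positivity)
      (add_le_add (sq_le_sq.2 (ha.trans (le_abs_self M))) (pow_le_one₀ ε_pos.le hε.2))
  have lower : log (ε ^ 2) ≤ log (a ^ 2 + ε ^ 2) :=
    log_le_log (by positivity) (le_add_of_nonneg_left (sq_nonneg a))
  have log_const_nonneg : 0 ≤ log (M ^ 2 + 1) := log_nonneg (le_add_of_nonneg_left (sq_nonneg M))
  have := log_one_div_sq_nonneg hε
  have log_inv : log (1 / ε ^ 2) = -log (ε ^ 2) := by rw [one_div, log_inv]
  rw [abs_le]
  constructor <;> linarith

end RealInequalities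

variable {X E : Type*} [PseudoMetricSpace X] [SeminormedAddCommGroup E] {Q : Set X} {K : ℝ≥0}

section Lipschitz

variable {f : X → E} {φ : X → ℝ}

lemma isBigO_one_of_lipschitzOnWith (hQ : IsBounded Q) (hf : LipschitzOnWith K f Q) :
    f =O[𝓟 Q] (1 : X → ℝ) := by
  rcases Q.eq_empty_or_nonempty with rfl | ⟨x₀, hx₀⟩
  · simp
  refine isBigO_principal.2 ⟨‖f x₀‖ + K * Metric.diam Q, fun x hx ↦ ?_⟩
  calc ‖f x‖ ≤ ‖f x₀‖ + ‖f x - f x₀‖ := norm_le_norm_add_norm_sub' _ _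
    _ ≤ ‖f x₀‖ + K * dist x x₀ := by
        rw [← dist_eq_norm]
        gcongr
        exact hf.dist_le_mul x hx x₀ hx₀
    _ ≤ ‖f x₀‖ + K * Metric.diam Q := by
        gcongr
        exact Metric.dist_le_diam_of_mem hQ hx hx₀
    _ = (‖f x₀‖ + K * Metric.diam Q) * ‖(1 : X → ℝ) x‖ := by simp

lemma exists_abs_le_mul_abs_add_dist (hf : LipschitzOnWith K f Q) (hφ : φ =Θ[𝓟 Q] f) :
    ∃ C, ∀ x ∈ Q, ∀ y ∈ Q, |φ x| ≤ C * (|φ y| + dist x y) := by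
  obtain ⟨A, hA, hφf⟩ := hφ.isBigO.exists_nonneg
  obtain ⟨B, hB, hfφ⟩ := hφ.isBigO_symm.exists_nonneg
  rw [isBigOWith_principal] at hφf hfφ
  refine ⟨A * (B + K), fun x hx y hy ↦ ?_⟩
  calc |φ x| ≤ A * ‖f x‖ := hφf x hx
    _ ≤ A * (‖f y‖ + dist (f x) (f y)) := by
        rw [dist_eq_norm]
        gcongr
        exact norm_le_norm_add_norm_sub' _ _
    _ ≤ A * (B * |φ y| + K * dist x y) := by
        gcongr
        exacts [hfφ y hy, hf.dist_le_mul x hx y hy]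
    _ ≤ A * ((B + K) * |φ y| + (B + K) * dist x y) := by
        gcongr
        exacts [le_add_of_nonneg_right K.2, le_add_of_nonneg_left hB]
    _ = A * (B + K) * (|φ y| + dist x y) := by ring

end Lipschitz

/-- `exp (F ε)` is an order function on `Q` at scale `ε`, uniformly in `ε ∈ (0, 1]`: the variation
`F ε x - F ε y` is `O(1 + log (1 + d(x, y)² / ε²))`. The uniform `O` is the one along the principal
filter of the set of admissible triples `(ε, x, y)`. -/
def IsLogOrderOn (F : ℝ → X → ℝ) (Q : Set X) : Prop :=
  (fun p : ℝ × X × X ↦ F p.1 p.2.1 - F p.1 p.2.2) =O[𝓟 (Ioc 0 1 ×ˢ Q ×ˢ Q)]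
    fun p ↦ logGauge p.1 (dist p.2.1 p.2.2)

/-- The family `F` grows at most logarithmically as `ε → 0`, uniformly on `Q`:
`F ε x = O(1 + log (1 / ε²))` for `ε ∈ (0, 1]` and `x ∈ Q`. -/
def HasLogGrowthOn {Y : Type*} (F : ℝ → Y → ℝ) (Q : Set Y) : Prop :=
  (fun p : ℝ × Y ↦ F p.1 p.2) =O[𝓟 (Ioc 0 1 ×ˢ Q)] fun p ↦ 1 + log (1 / p.1 ^ 2)

section LogOrder

variable {F G : ℝ → X → ℝ} {χ φ : X → ℝ} {f : X → E}

lemma IsLogOrderOn.add (hF : IsLogOrderOn F Q) (hG : IsLogOrderOn G Q) :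
    IsLogOrderOn (fun ε x ↦ F ε x + G ε x) Q :=
  (IsBigO.add hF hG).congr_left fun _ ↦ (add_sub_add_comm _ _ _ _).symm

lemma IsLogOrderOn.sub (hF : IsLogOrderOn F Q) (hG : IsLogOrderOn G Q) :
    IsLogOrderOn (fun ε x ↦ F ε x - G ε x) Q :=
  (IsBigO.sub hF hG).congr_left fun _ ↦ (sub_sub_sub_comm _ _ _ _).symm

lemma HasLogGrowthOn.sub {Y : Type*} {F G : ℝ → Y → ℝ} {Q : Set Y}
    (hF : HasLogGrowthOn F Q) (hG : HasLogGrowthOn G Q) :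
    HasLogGrowthOn (fun ε x ↦ F ε x - G ε x) Q :=
  IsBigO.sub hF hG

lemma isLogOrderOn_const (c : ℝ → ℝ) (Q : Set X) : IsLogOrderOn (fun ε _ ↦ c ε) Q := by
  simpa only [IsLogOrderOn, sub_self] using isBigO_zero _ _

lemma hasLogGrowthOn_log_one_div_sq {Y : Type*} (Q : Set Y) :
    HasLogGrowthOn (fun ε _ ↦ log (1 / ε ^ 2)) Q :=
  .of_norm_eventuallyLE <| eventually_principal.2 fun p hp ↦ by
    change ‖log (1 / p.1 ^ 2)‖ ≤ 1 + log (1 / p.1 ^ 2)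
    rw [norm_of_nonneg (log_one_div_sq_nonneg hp.1)]
    exact le_add_of_nonneg_left zero_le_one

lemma dist_mul_one_add_log_isBigO_logGauge (hQ : IsBounded Q) :
    (fun p : ℝ × X × X ↦ dist p.2.1 p.2.2 * (1 + log (1 / p.1 ^ 2)))
      =O[𝓟 (Ioc 0 1 ×ˢ Q ×ˢ Q)] fun p ↦ logGauge p.1 (dist p.2.1 p.2.2) := by
  refine isBigO_principal.2 ⟨Metric.diam Q + 2, fun ⟨ε, x, y⟩ ⟨hε, hx, hy⟩ ↦ ?_⟩
  rw [norm_of_nonneg (zero_le_one.trans (one_le_logGauge _ _)),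
    norm_of_nonneg (mul_nonneg dist_nonneg
      (add_nonneg zero_le_one (log_one_div_sq_nonneg hε)))]
  exact mul_one_add_log_one_div_sq_le hε.1.ne' dist_nonneg (Metric.dist_le_diam_of_mem hQ hx hy)

lemma IsLogOrderOn.lipschitz_mul (hF : IsLogOrderOn F Q) (hF_growth : HasLogGrowthOn F Q)
    (hQ : IsBounded Q) (hχ : LipschitzOnWith K χ Q) : IsLogOrderOn (fun ε x ↦ χ x * F ε x) Q := by
  have χ_bounded : (fun p : ℝ × X × X ↦ χ p.2.1) =O[𝓟 (Ioc 0 1 ×ˢ Q ×ˢ Q)] fun _ ↦ (1 : ℝ) :=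
    (isBigO_one_of_lipschitzOnWith hQ hχ).comp_tendsto
      (tendsto_principal_principal.2 fun _ hp ↦ hp.2.1)
  have χ_diff : (fun p : ℝ × X × X ↦ χ p.2.1 - χ p.2.2)
      =O[𝓟 (Ioc 0 1 ×ˢ Q ×ˢ Q)] fun p ↦ dist p.2.1 p.2.2 :=
    isBigO_principal.2 ⟨K, fun p hp ↦ by
      simpa only [norm_of_nonneg dist_nonneg, dist_eq_norm] using
        hχ.dist_le_mul p.2.1 hp.2.1 p.2.2 hp.2.2⟩
  have F_growth : (fun p : ℝ × X × X ↦ F p.1 p.2.2)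
      =O[𝓟 (Ioc 0 1 ×ˢ Q ×ˢ Q)] fun p ↦ 1 + log (1 / p.1 ^ 2) :=
    hF_growth.comp_tendsto (k := fun p : ℝ × X × X ↦ (p.1, p.2.2))
      (tendsto_principal_principal.2 fun _ hp ↦ ⟨hp.1, hp.2.2⟩)
  have main_term := (χ_bounded.mul hF).congr_right fun _ ↦ one_mul _
  have error_term := (χ_diff.mul F_growth).trans (dist_mul_one_add_log_isBigO_logGauge hQ)
  exact (main_term.add error_term).congr_left fun _ ↦ by ring

lemma isLogOrderOn_log_sq_add_sq (hf : LipschitzOnWith K f Q) (hφ : φ =Θ[𝓟 Q] f) :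
    IsLogOrderOn (fun ε x ↦ log (φ x ^ 2 + ε ^ 2)) Q := by
  obtain ⟨C, hC⟩ := exists_abs_le_mul_abs_add_dist hf hφ
  refine isBigO_principal.2 ⟨log (2 * C ^ 2 + 1) + 1, fun ⟨ε, x, y⟩ ⟨hε, hx, hy⟩ ↦ ?_⟩
  rw [norm_of_nonneg (zero_le_one.trans (one_le_logGauge _ _))]
  refine abs_sub_le_iff.2 ⟨log_sq_add_sq_sub_le hε.1.ne' (hC x hx y hy), ?_⟩
  exact log_sq_add_sq_sub_le hε.1.ne' (dist_comm x y ▸ hC y hy x hx)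

lemma hasLogGrowthOn_log_sq_add_sq {Y : Type*} {φ : Y → ℝ} {Q : Set Y}
    (hφ : φ =O[𝓟 Q] (1 : Y → ℝ)) : HasLogGrowthOn (fun ε x ↦ log (φ x ^ 2 + ε ^ 2)) Q := by
  obtain ⟨M, hM⟩ := isBigO_principal.1 hφ
  refine isBigO_principal.2 ⟨log (M ^ 2 + 1) + 1, fun ⟨ε, x⟩ ⟨hε, hx⟩ ↦ ?_⟩
  have l_nonneg : 0 ≤ log (1 / ε ^ 2) := log_one_div_sq_nonneg hε
  have log_const_nonneg : 0 ≤ log (M ^ 2 + 1) := log_nonneg (le_add_of_nonneg_left (sq_nonneg M))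
  rw [norm_of_nonneg (add_nonneg zero_le_one l_nonneg)]
  have hφM : |φ x| ≤ M := by simpa using hM x hx
  exact (abs_log_sq_add_sq_le hε hφM).trans (by nlinarith)

lemma IsLogOrderOn.exists_exp_sub_le (hF : IsLogOrderOn F Q) :
    ∃ C N : ℝ, 1 ≤ C ∧ 0 < N ∧ ∀ ε ∈ Ioc (0 : ℝ) 1, ∀ x ∈ Q, ∀ y ∈ Q,
      exp (F ε x - F ε y) ≤ C * (1 + dist x y ^ 2 / ε ^ 2) ^ N := by
  obtain ⟨c, c_pos, hc⟩ := IsBigO.exists_pos hF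
  refine ⟨exp c, c, one_le_exp c_pos.le, c_pos, fun ε hε x hx y hy ↦ ?_⟩
  rw [← exp_mul_logGauge, exp_le_exp,
    ← norm_of_nonneg (zero_le_one.trans (one_le_logGauge ε (dist x y)))]
  exact (le_abs_self _).trans (isBigOWith_principal.1 hc (ε, x, y) ⟨hε, hx, hy⟩)

end LogOrder

/-- The escape function `G_ε` built from the defining functions `φp`, `φm` of the two sets, the
cutoff `χ` and the correction `g`. -/
noncomputable def escapeWeight {Y : Type*} (φp φm χ g : Y → ℝ) (ε : ℝ) (x : Y) : ℝ :=
  χ x * log ((φm x ^ 2 + ε ^ 2) / (φp x ^ 2 + ε ^ 2)) + log (1 / ε ^ 2) * g x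

lemma escapeWeight_eq_log_sub_log {Y : Type*} (φp φm χ g : Y → ℝ) {ε : ℝ} (hε : ε ≠ 0) (x : Y) :
    escapeWeight φp φm χ g ε x =
      χ x * (log (φm x ^ 2 + ε ^ 2) - log (φp x ^ 2 + ε ^ 2)) + g x * log (1 / ε ^ 2) := by
  rw [escapeWeight, log_div (by positivity) (by positivity), mul_comm (g x)]

theorem escape_weight_order_function_general {E' : Type*} [SeminormedAddCommGroup E']
    (hQ : IsBounded Q) {fp : X → E} {fm : X → E'} {φp φm χ g : X → ℝ} {Kp Km Kχ Kg : ℝ≥0}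
    (hfp : LipschitzOnWith Kp fp Q) (hfm : LipschitzOnWith Km fm Q)
    (hφp : φp =Θ[𝓟 Q] fp) (hφm : φm =Θ[𝓟 Q] fm)
    (hχ : LipschitzOnWith Kχ χ Q) (hg : LipschitzOnWith Kg g Q) :
    ∃ C₂ N : ℝ, 1 ≤ C₂ ∧ 0 < N ∧ ∀ ε ∈ Ioc (0 : ℝ) 1, ∀ x ∈ Q, ∀ y ∈ Q,
      exp (escapeWeight φp φm χ g ε x - escapeWeight φp φm χ g ε y)
        ≤ C₂ * (1 + dist x y ^ 2 / ε ^ 2) ^ N := by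
  have growth_p := hasLogGrowthOn_log_sq_add_sq
    (hφp.isBigO.trans (isBigO_one_of_lipschitzOnWith hQ hfp))
  have growth_m := hasLogGrowthOn_log_sq_add_sq
    (hφm.isBigO.trans (isBigO_one_of_lipschitzOnWith hQ hfm))
  have log_ratio_order :=
    (isLogOrderOn_log_sq_add_sq hfm hφm).sub (isLogOrderOn_log_sq_add_sq hfp hφp)
  have χ_term := log_ratio_order.lipschitz_mul (growth_m.sub growth_p) hQ hχ
  have g_term := (isLogOrderOn_const _ Q).lipschitz_mul (hasLogGrowthOn_log_one_div_sq Q) hQ hg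
  obtain ⟨C₂, N, hC₂, hN, bound⟩ := (χ_term.add g_term).exists_exp_sub_le
  refine ⟨C₂, N, hC₂, hN, fun ε hε x hx y hy ↦ ?_⟩
  simpa only [escapeWeight_eq_log_sub_log _ _ _ _ hε.1.ne'] using bound ε hε x hx y hy

lemma isTheta_principal_of_div_le_of_le_mul {Y : Type*} {s : Set Y} {φ f : Y → ℝ} {C : ℝ}
    (hC : 0 < C) (hf : ∀ x ∈ s, 0 ≤ f x)
    (h : ∀ x ∈ s, 1 / C * f x ≤ |φ x| ∧ |φ x| ≤ C * f x) : φ =Θ[𝓟 s] f := by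
  refine ⟨isBigO_principal.2 ⟨C, fun x hx ↦ ?_⟩, isBigO_principal.2 ⟨C, fun x hx ↦ ?_⟩⟩
  · exact (norm_of_nonneg (hf x hx)).symm ▸ (h x hx).2
  · rw [norm_of_nonneg (hf x hx), ← inv_mul_le_iff₀ hC, ← one_div]
    exact (h x hx).1

end EscapeWeight

/-- The escape-function weight is an order function (Lemma 4.3): with
G_ε(ρ) = χ(ρ)·log((φ₋² + ε²)/(φ₊² + ε²)) + log(1/ε²)·g(ρ), where φ± are comparable
to the distances to Γ± on a compact set Q and χ, g are bounded Lipschitz, there are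
C₂ ≥ 1 and N > 0 with exp(G_ε(ρ) − G_ε(ρ')) ≤ C₂(1 + |ρ−ρ'|²/ε²)^N on Q. -/
theorem escape_weight_order_function (d : ℕ)
    (Q : Set (EuclideanSpace ℝ (Fin d))) (hQ : IsCompact Q)
    (Γp Γm : Set (EuclideanSpace ℝ (Fin d))) (hΓp : Γp.Nonempty) (hΓm : Γm.Nonempty)
    (C : ℝ) (hC : 1 ≤ C)
    (φp φm : EuclideanSpace ℝ (Fin d) → ℝ)
    (hφp : ∀ ρ ∈ Q, (1 / C) * Metric.infDist ρ Γp ≤ |φp ρ| ∧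
      |φp ρ| ≤ C * Metric.infDist ρ Γp)
    (hφm : ∀ ρ ∈ Q, (1 / C) * Metric.infDist ρ Γm ≤ |φm ρ| ∧
      |φm ρ| ≤ C * Metric.infDist ρ Γm)
    (χ g : EuclideanSpace ℝ (Fin d) → ℝ)
    (Kχ Kg : ℝ≥0) (hχlip : LipschitzWith Kχ χ) (hglip : LipschitzWith Kg g)
    (Bχ Bg : ℝ) (hχb : ∀ x, |χ x| ≤ Bχ) (hgb : ∀ x, |g x| ≤ Bg) :
    ∃ C₂ N : ℝ, 1 ≤ C₂ ∧ 0 < N ∧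
      ∀ ε ∈ Set.Ioc (0 : ℝ) (1 / 2), ∀ ρ ∈ Q, ∀ ρ' ∈ Q,
        Real.exp
          ((χ ρ * Real.log ((φm ρ ^ 2 + ε ^ 2) / (φp ρ ^ 2 + ε ^ 2))
              + Real.log (1 / ε ^ 2) * g ρ)
            - (χ ρ' * Real.log ((φm ρ' ^ 2 + ε ^ 2) / (φp ρ' ^ 2 + ε ^ 2))
              + Real.log (1 / ε ^ 2) * g ρ'))
          ≤ C₂ * (1 + ‖ρ - ρ'‖ ^ 2 / ε ^ 2) ^ N := by
  have hC_pos : 0 < C := zero_lt_one.trans_le hC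
  have infDist_nonneg (Γ : Set (EuclideanSpace ℝ (Fin d))) : ∀ ρ ∈ Q, 0 ≤ Metric.infDist ρ Γ :=
    fun _ _ ↦ Metric.infDist_nonneg
  obtain ⟨C₂, N, hC₂, hN, bound⟩ := escape_weight_order_function_general hQ.isBounded
    (Metric.lipschitz_infDist_pt Γp).lipschitzOnWith
    (Metric.lipschitz_infDist_pt Γm).lipschitzOnWith
    (isTheta_principal_of_div_le_of_le_mul hC_pos (infDist_nonneg Γp) hφp)
    (isTheta_principal_of_div_le_of_le_mul hC_pos (infDist_nonneg Γm) hφm)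
    hχlip.lipschitzOnWith hglip.lipschitzOnWith
  refine ⟨C₂, N, hC₂, hN, fun ε hε ρ hρ ρ' hρ' ↦ ?_⟩
  rw [← dist_eq_norm]
  exact bound ε ⟨hε.1, hε.2.trans (by norm_num)⟩ ρ hρ ρ' hρ'
end

section
/- Kuranishi factorization with midpoint estimate (equation (3.10) in the proof of Lemma 3.2): let f : ℝⁿ → ℝⁿ be three times continuously differentiable with ‖D³f(z)‖ ≤ K for all z in a convex set S ⊆ ℝⁿ, and define F(x, y) = ∫₀¹ Df(y + s(x − y)) ds (an n×n-matrix-valued function). Then for all x, y ∈ S: f(x) − f(y) = F(x, y)(x − y), and ‖F(x, y) − Df((x + y)/2)‖ ≤ (K/24)·‖x − y‖². -/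
/-!
Along the segment from `y` to `x`, put `c = (x + y) / 2` and `v = x - y`. Taylor's formula for `Df`
at `c` gives `Df (y + s v) = Df c + (s - 1/2) D²f c v + R s` with `‖R s‖ ≤ K ‖v‖² (s - 1/2)² / 2`.
The linear term is odd about `s = 1/2` and so integrates to zero over `[0, 1]`, and
`∫₀¹ (s - 1/2)² ds = 1/12` produces the constant `K / 24`.
-/

open MeasureTheory Set
open scoped Nat

section OneVariable

variable {V : Type*} [NormedAddCommGroup V] [NormedSpace ℝ V] [CompleteSpace V]

lemma integral_sub_midpoint (a b : ℝ) : ∫ s in a..b, (s - (a + b) / 2) = 0 := by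
  rw [intervalIntegral.integral_comp_sub_right (fun s ↦ s), integral_id]
  ring

lemma integral_sub_midpoint_sq (a b : ℝ) :
    ∫ s in a..b, (s - (a + b) / 2) ^ 2 = (b - a) ^ 3 / 12 := by
  rw [intervalIntegral.integral_comp_sub_right (fun s ↦ s ^ 2), integral_pow]
  ring

lemma norm_integral_sub_smul_le_of_norm_sub_affine_le {a b C : ℝ} {g : ℝ → V} {p q : V}
    (hab : a ≤ b) (hg : IntervalIntegrable g volume a b)
    (h : ∀ s ∈ Icc a b, ‖g s - p - (s - (a + b) / 2) • q‖ ≤ C * (s - (a + b) / 2) ^ 2) :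
    ‖(∫ s in a..b, g s) - (b - a) • p‖ ≤ C * (b - a) ^ 3 / 12 := by
  have linear_integrable : IntervalIntegrable (fun s ↦ (s - (a + b) / 2) • q) volume a b :=
    Continuous.intervalIntegrable (by fun_prop) a b
  have remainder : (∫ s in a..b, g s) - (b - a) • p =
      ∫ s in a..b, (g s - p - (s - (a + b) / 2) • q) := by
    rw [intervalIntegral.integral_sub (hg.sub intervalIntegrable_const) linear_integrable,
      intervalIntegral.integral_sub hg intervalIntegrable_const, intervalIntegral.integral_const,
      intervalIntegral.integral_smul_const, integral_sub_midpoint, zero_smul, sub_zero]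
  calc ‖(∫ s in a..b, g s) - (b - a) • p‖
      = ‖∫ s in a..b, (g s - p - (s - (a + b) / 2) • q)‖ := by rw [remainder]
    _ ≤ ∫ s in a..b, C * (s - (a + b) / 2) ^ 2 :=
        intervalIntegral.norm_integral_le_of_norm_le hab
          (.of_forall fun s hs ↦ h s (Ioc_subset_Icc_self hs))
          (Continuous.intervalIntegrable (by fun_prop) a b)
    _ = C * (b - a) ^ 3 / 12 := by
        rw [intervalIntegral.integral_const_mul, integral_sub_midpoint_sq, mul_div_assoc]

end OneVariable

section Segment

variable {E F : Type*} [NormedAddCommGroup E] [NormedSpace ℝ E]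
  [NormedAddCommGroup F] {f : E → F} {x y : E} {K : ℝ}

lemma add_smul_sub_mem_segment {s : ℝ} (hs : s ∈ Icc (0 : ℝ) 1) :
    y + s • (x - y) ∈ segment ℝ x y :=
  (convex_segment x y).add_smul_sub_mem (right_mem_segment ℝ x y) (left_mem_segment ℝ x y) hs

lemma intervalIntegrable_of_continuousOn_segment (hf : ContinuousOn f (segment ℝ x y)) :
    IntervalIntegrable (fun s : ℝ ↦ f (y + s • (x - y))) volume 0 1 :=
  (hf.comp (by fun_prop) fun _ hs ↦ add_smul_sub_mem_segment hs).intervalIntegrable_of_Icc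
    zero_le_one

variable [NormedSpace ℝ F] [CompleteSpace F]

lemma norm_map_add_sub_sum_iteratedFDeriv_le {v : E} {n : ℕ}
    (hf : ∀ t ∈ Icc (0 : ℝ) 1, ContDiffAt ℝ (n + 1) f (x + t • v))
    (hK : ∀ t ∈ Icc (0 : ℝ) 1, ‖iteratedFDeriv ℝ (n + 1) f (x + t • v)‖ ≤ K) :
    ‖f (x + v) - ∑ k ∈ Finset.range (n + 1), (k ! : ℝ)⁻¹ • iteratedFDeriv ℝ k f x (fun _ ↦ v)‖ ≤
      K * ‖v‖ ^ (n + 1) / (n + 1)! := by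
  have integrand_le : ∀ t ∈ Ioc (0 : ℝ) 1,
      ‖(1 - t) ^ n • iteratedFDeriv ℝ (n + 1) f (x + t • v) (fun _ ↦ v)‖ ≤
        (1 - t) ^ n * (K * ‖v‖ ^ (n + 1)) := fun t ht ↦ by
    have : 0 ≤ (1 - t) ^ n := pow_nonneg (sub_nonneg.2 ht.2) n
    rw [norm_smul, Real.norm_of_nonneg this]
    gcongr
    simpa using ContinuousMultilinearMap.le_of_opNorm_le (hK t ⟨ht.1.le, ht.2⟩) (fun _ ↦ v)
  have integral_weight : ∫ t in (0 : ℝ)..1, (1 - t) ^ n = (n + 1 : ℝ)⁻¹ := by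
    rw [intervalIntegral.integral_comp_sub_left (fun t ↦ t ^ n), integral_pow]
    simp
  rw [map_add_eq_sum_add_integral_iteratedFDeriv hf, add_sub_cancel_left, norm_smul,
    Real.norm_of_nonneg (by positivity)]
  calc (n ! : ℝ)⁻¹ *
        ‖∫ t in (0 : ℝ)..1, (1 - t) ^ n • iteratedFDeriv ℝ (n + 1) f (x + t • v) (fun _ ↦ v)‖
      ≤ (n ! : ℝ)⁻¹ * ∫ t in (0 : ℝ)..1, (1 - t) ^ n * (K * ‖v‖ ^ (n + 1)) := by
        gcongr
        exact intervalIntegral.norm_integral_le_of_norm_le zero_le_one (.of_forall integrand_le)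
          (Continuous.intervalIntegrable (by fun_prop) 0 1)
    _ = K * ‖v‖ ^ (n + 1) / (n + 1)! := by
        rw [intervalIntegral.integral_mul_const, integral_weight, Nat.factorial_succ]
        push_cast
        field_simp

lemma norm_sub_sub_fderiv_le_of_norm_iteratedFDeriv_two_le
    (hf : ∀ z ∈ segment ℝ x y, ContDiffAt ℝ 2 f z)
    (hK : ∀ z ∈ segment ℝ x y, ‖iteratedFDeriv ℝ 2 f z‖ ≤ K) :
    ‖f x - f y - fderiv ℝ f y (x - y)‖ ≤ K / 2 * ‖x - y‖ ^ 2 := by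
  have taylor := norm_map_add_sub_sum_iteratedFDeriv_le (n := 1)
    (fun t ht ↦ by simpa [one_add_one_eq_two] using hf _ (add_smul_sub_mem_segment ht))
    (fun t ht ↦ hK _ (add_smul_sub_mem_segment ht))
  simpa [Finset.sum_range_succ, ← sub_sub, mul_div_right_comm] using taylor

lemma norm_integral_segment_sub_midpoint_le
    (hf : ∀ z ∈ segment ℝ x y, ContDiffAt ℝ 2 f z)
    (hK : ∀ z ∈ segment ℝ x y, ‖iteratedFDeriv ℝ 2 f z‖ ≤ K) :
    ‖(∫ s in (0 : ℝ)..1, f (y + s • (x - y))) - f (midpoint ℝ x y)‖ ≤ K / 24 * ‖x - y‖ ^ 2 := by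
  set c := midpoint ℝ x y with hc
  have offset (s : ℝ) : y + s • (x - y) - c = (s - (0 + 1) / 2) • (x - y) := by
    rw [hc, midpoint_eq_smul_add, invOf_eq_inv]
    module
  have taylor : ∀ s ∈ Icc (0 : ℝ) 1,
      ‖f (y + s • (x - y)) - f c - (s - (0 + 1) / 2) • fderiv ℝ f c (x - y)‖ ≤
        K / 2 * ‖x - y‖ ^ 2 * (s - (0 + 1) / 2) ^ 2 := fun s hs ↦ by
    have subset : segment ℝ (y + s • (x - y)) c ⊆ segment ℝ x y :=
      (convex_segment x y).segment_subset (add_smul_sub_mem_segment hs) (midpoint_mem_segment x y)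
    have := norm_sub_sub_fderiv_le_of_norm_iteratedFDeriv_two_le
      (fun z hz ↦ hf z (subset hz)) (fun z hz ↦ hK z (subset hz))
    rwa [offset, map_smul, norm_smul, mul_pow, Real.norm_eq_abs, sq_abs, mul_comm (_ ^ 2),
      ← mul_assoc] at this
  have integrable : IntervalIntegrable (fun s : ℝ ↦ f (y + s • (x - y))) volume 0 1 :=
    intervalIntegrable_of_continuousOn_segment fun z hz ↦ (hf z hz).continuousAt.continuousWithinAt
  calc ‖(∫ s in (0 : ℝ)..1, f (y + s • (x - y))) - f c‖
      ≤ K / 2 * ‖x - y‖ ^ 2 * (1 - 0) ^ 3 / 12 := by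
        simpa only [sub_zero, one_smul] using
          norm_integral_sub_smul_le_of_norm_sub_affine_le zero_le_one integrable taylor
    _ = K / 24 * ‖x - y‖ ^ 2 := by ring

lemma sub_eq_integral_fderiv_segment_apply (hf : ∀ z ∈ segment ℝ x y, ContDiffAt ℝ 1 f z) :
    f x - f y = (∫ s in (0 : ℝ)..1, fderiv ℝ f (y + s • (x - y))) (x - y) := by
  have integrable : IntervalIntegrable (fun s : ℝ ↦ fderiv ℝ f (y + s • (x - y))) volume 0 1 :=
    intervalIntegrable_of_continuousOn_segment fun z hz ↦
      ((hf z hz).fderiv_right (m := 0) (by simp)).continuousAt.continuousWithinAt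
  have taylor := map_add_eq_sum_add_integral_iteratedFDeriv (n := 0) (x := y) (y := x - y)
    (fun t ht ↦ by simpa using hf _ (add_smul_sub_mem_segment ht))
  rw [ContinuousLinearMap.intervalIntegral_apply integrable, sub_eq_iff_eq_add']
  simpa using taylor

theorem kuranishi_midpoint_estimate_general (hf : ∀ z ∈ segment ℝ x y, ContDiffAt ℝ 3 f z)
    (hK : ∀ z ∈ segment ℝ x y, ‖iteratedFDeriv ℝ 3 f z‖ ≤ K) :
    f x - f y = (∫ s in (0 : ℝ)..1, fderiv ℝ f (y + s • (x - y))) (x - y) ∧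
      ‖(∫ s in (0 : ℝ)..1, fderiv ℝ f (y + s • (x - y)))
          - fderiv ℝ f ((2⁻¹ : ℝ) • (x + y))‖ ≤ K / 24 * ‖x - y‖ ^ 2 := by
  refine ⟨sub_eq_integral_fderiv_segment_apply fun z hz ↦ (hf z hz).of_le (by norm_num), ?_⟩
  rw [← invOf_eq_inv, ← midpoint_eq_smul_add]
  exact norm_integral_segment_sub_midpoint_le
    (fun z hz ↦ (hf z hz).fderiv_right (by norm_num))
    (fun z hz ↦ norm_iteratedFDeriv_fderiv.trans_le (hK z hz))

end Segment

/-- Kuranishi factorization with midpoint estimate (equation (3.10)): if f is C³ with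
‖D³f‖ ≤ K on a convex set S and F(x, y) = ∫₀¹ Df(y + s(x − y)) ds, then for x, y ∈ S
one has f(x) − f(y) = F(x, y)(x − y) and
‖F(x, y) − Df((x + y)/2)‖ ≤ (K/24)‖x − y‖². -/
theorem kuranishi_midpoint_estimate (n : ℕ)
    (f : EuclideanSpace ℝ (Fin n) → EuclideanSpace ℝ (Fin n))
    (hf : ContDiff ℝ 3 f)
    (S : Set (EuclideanSpace ℝ (Fin n))) (hS : Convex ℝ S)
    (K : ℝ) (hK : ∀ z ∈ S, ‖iteratedFDeriv ℝ 3 f z‖ ≤ K) :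
    ∀ x ∈ S, ∀ y ∈ S,
      f x - f y = (∫ s in (0 : ℝ)..1, fderiv ℝ f (y + s • (x - y))) (x - y) ∧
      ‖(∫ s in (0 : ℝ)..1, fderiv ℝ f (y + s • (x - y)))
          - fderiv ℝ f ((2⁻¹ : ℝ) • (x + y))‖ ≤ K / 24 * ‖x - y‖ ^ 2 := fun _ hx _ hy ↦
  kuranishi_midpoint_estimate_general (fun _ _ ↦ hf.contDiffAt)
    fun z hz ↦ hK z (hS.segment_subset hx hy hz)
end
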